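/- Every model of the theory REF(bin) has Scott rank strictly less than ω₁, where REF(bin) is the first-order theory in the language {E_n : n < ω} (each E_n binary) asserting: each E_n is an equivalence relation, E_0 has exactly two classes, E_{n+1} refines E_n, and each E_n-class is the union of exactly two E_{n+1}-classes. -/

import Mathlib

open FirstOrder

universe u v w

namespace ScottTools

variable (L : FirstOrder.Language.{u, v}) (M : Type w) (N : Type w) [L.Structure M] [L.Structure N]

/-- Two tuples (of the same length) have the same quantifier-free type. -/
def QFEquiv {n : ℕ} (a : Fin n → M) (b : Fin n → N) : Prop :=
  ∀ φ : L.Formula (Fin n), φ.IsQF → (φ.Realize a ↔ φ.Realize b)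

/-- The ordinal-indexed back-and-forth equivalence `(M, ā) ≡_α (N, b̄)`:
`≡₀` is equality of quantifier-free types, `≡_{α+1}` is the back-and-forth condition
with respect to `≡_α`, and limit stages are intersections. -/
def BFEquiv : Ordinal.{w} → (n : ℕ) → (Fin n → M) → (Fin n → N) → Prop
  | α, n, a, b =>
    QFEquiv L M N a b ∧
    ∀ β : Ordinal.{w}, β < α →
      (∀ x : M, ∃ y : N, BFEquiv β (n + 1) (Fin.snoc a x) (Fin.snoc b y)) ∧
      (∀ y : N, ∃ x : M, BFEquiv β (n + 1) (Fin.snoc a x) (Fin.snoc b y))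
  termination_by α => α

/-- `(M, ā) ≡_∞ (N, b̄)`: back-and-forth equivalent for all ordinals. -/
def BFEquivInf (n : ℕ) (a : Fin n → M) (b : Fin n → N) : Prop :=
  ∀ α : Ordinal.{w}, BFEquiv L M N α n a b

/-- The Scott rank of a structure: the least ordinal `α` such that any two finite tuples
that are `≡_α`-equivalent are `≡_∞`-equivalent. -/
noncomputable def ScottRank : Ordinal.{w} :=
  sInf {α : Ordinal.{w} | ∀ (n : ℕ) (a b : Fin n → M),
    BFEquiv L M M α n a b → BFEquivInf L M M n a b}

/-- `B` is a base for `M`: distinct elements of `M` have distinct complete first-order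
types over `B`. -/
def IsBase (B : Set M) : Prop :=
  ∀ a b : M,
    (∀ (k : ℕ) (p : Fin k → M), (∀ i, p i ∈ B) →
      ∀ φ : L.Formula (Fin (k + 1)),
        (φ.Realize (Fin.snoc p a) ↔ φ.Realize (Fin.snoc p b))) →
    a = b

end ScottTools

namespace PP

open FirstOrder

/-- The language `ℒ_P`: one binary relation symbol `E_p` for each `p : P`. -/
def LP (P : Type u) : FirstOrder.Language :=
  ⟨fun _ => Empty, fun k => PLift (k = 2) × P⟩

/-- The interpretation of the relation symbol `E_p`. -/
def Rel {P : Type u} {M : Type w} [(LP P).Structure M] (p : P) (a b : M) : Prop :=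
  Language.Structure.RelMap (L := LP P) (M := M) (n := 2) (⟨⟨rfl⟩, p⟩ : PLift (2 = 2) × P) ![a, b]

/-- `M` satisfies the axioms of `T_P` (with respect to the order `le` on `P` and the
splitting function `δ`): each `E_q` is an equivalence relation; `E_q` refines `E_{q'}` for
`q' ≤ q` and partitions each `E_{<q}`-class into exactly `δ q` classes; and coherent
sequences indexed by finite downward-closed sets have common refinements. -/
def ModelsTP {P : Type u} (le : P → P → Prop) (δ : P → ℕ) (M : Type w)
    [(LP P).Structure M] : Prop :=
  (∀ p : P, Equivalence (fun a b : M => Rel p a b)) ∧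
  (∀ p q : P, le p q → ∀ a b : M, Rel q a b → Rel p a b) ∧
  (∀ (q : P) (a : M), ∃ f : Fin (δ q) → M,
      (∀ (i : Fin (δ q)) (p : P), le p q → p ≠ q → Rel p (f i) a) ∧
      (∀ i j : Fin (δ q), i ≠ j → ¬ Rel q (f i) (f j)) ∧
      (∀ b : M, (∀ p : P, le p q → p ≠ q → Rel p b a) → ∃ i, Rel q b (f i))) ∧
  (∀ Q : Finset P, (∀ p q : P, le p q → q ∈ Q → p ∈ Q) →
      ∀ a : P → M, (∀ p q : P, p ∈ Q → q ∈ Q → le p q → Rel p (a p) (a q)) →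
      ∃ z : M, ∀ q ∈ Q, Rel q z (a q))

end PP

open ScottTools PP

/-!
The classes of all the `E_n` form a binary tree with countably many nodes. Call two nodes
`α`-equivalent if they contain `≡_α`-equivalent points. As there are only countably many pairs of
nodes, some `α < ω₁` is such that `α`-equivalent nodes are `β`-equivalent for every `β < ω₁`.

Say that two points are similar if their classes modulo all the `E_n` have equally many elements,
infinity being a single value, and at each level the sibling nodes hanging off their branches are
`α`-equivalent. Points that are `≡_{α + ω}`-equivalent are similar. Conversely, tuples with the same
quantifier-free type and pointwise similar entries form a back-and-forth system: a new point
leaves the branches of the old ones at a definite sibling node, similarity supplies an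
`α`-equivalent node on the other side, and by the choice of `α` these two nodes are even
`(α + ω + 1)`-equivalent, so that the second one contains a point similar to the new one. Hence
`≡_{α + ω}` implies `≡_∞`.
-/

theorem encard_image_le_encard_image {ι : Type*} {M : Type*} {N : Type*} {a : ι → M} {b : ι → N}
    (h : ∀ i j, b i = b j → a i = a j) (s : Set ι) : (a '' s).encard ≤ (b '' s).encard := by
  obtain ⟨u, hus, hu⟩ := s.exists_subset_bijOn a
  have hb : Set.InjOn b u := fun i hi j hj hij => hu.injOn hi hj (h i j hij)
  calc (a '' s).encard = u.encard := by rw [← hu.image_eq, hu.injOn.encard_image]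
    _ = (b '' u).encard := hb.encard_image.symm
    _ ≤ (b '' s).encard := Set.encard_le_encard (Set.image_mono hus)

theorem rel_of_two_classes {M : Type*} {r : M → M → Prop} (hr : Equivalence r) {x y z b c : M}
    (hx : r x b ∨ r x c) (hy : r y b ∨ r y c) (hz : r z b ∨ r z c) : r x y ∨ r x z ∨ r y z := by
  have of_common {u v w : M} (hu : r u w) (hv : r v w) : r u v := hr.trans hu (hr.symm hv)
  rcases hx with hx | hx <;> rcases hy with hy | hy
  · exact .inl (of_common hx hy)
  · exact .inr (hz.imp (of_common hx) (of_common hy))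
  · exact .inr (hz.symm.imp (of_common hx) (of_common hy))
  · exact .inl (of_common hx hy)

open Ordinal in
theorem exists_lt_omega_one_forall_imp {ι : Type w} [Countable ι] {p : ι → Ordinal.{w} → Prop}
    (hp : ∀ i, Antitone (p i)) : ∃ α < ω₁, ∀ β < ω₁, ∀ i, p i α → p i β := by
  have exists_bound (i : ι) : ∃ α < ω₁, ∀ β < ω₁, p i α → p i β := by
    by_cases h : ∃ α < ω₁, ¬ p i α
    · obtain ⟨α, hα, hpα⟩ := h
      exact ⟨α, hα, fun _ _ hp' => absurd hp' hpα⟩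
    · push Not at h
      exact ⟨0, omega_pos 1, fun β hβ _ => h β hβ⟩
  choose bound hbound himp using exists_bound
  exact ⟨⨆ i, bound i, iSup_lt_omega_one hbound,
    fun β hβ i h => himp i β hβ (hp i (Ordinal.le_iSup bound i) h)⟩

namespace ScottTools

section

variable {L : FirstOrder.Language.{u, v}} {M N : Type w} [L.Structure M] [L.Structure N] {n : ℕ}
  {a : Fin n → M} {b : Fin n → N} {α β : Ordinal.{w}}

theorem QFEquiv.refl (a : Fin n → M) : QFEquiv L M M a a :=
  fun _ _ => Iff.rfl

theorem QFEquiv.symm (h : QFEquiv L M N a b) : QFEquiv L N M b a :=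
  fun φ hφ => (h φ hφ).symm

theorem QFEquiv.comp (h : QFEquiv L M N a b) {m : ℕ} (e : Fin m → Fin n) :
    QFEquiv L M N (a ∘ e) (b ∘ e) := fun φ hφ => by
  simpa only [Language.Formula.realize_relabel] using h (φ.relabel e) (hφ.relabel _)

theorem QFEquiv.eq_iff (h : QFEquiv L M N a b) (i j : Fin n) : a i = a j ↔ b i = b j := by
  simpa using h (Language.Term.equal (Language.Term.var i) (Language.Term.var j))
    (Language.BoundedFormula.IsAtomic.equal _ _).isQF

theorem bfEquiv_iff : BFEquiv L M N α n a b ↔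
    QFEquiv L M N a b ∧ ∀ β < α,
      (∀ x, ∃ y, BFEquiv L M N β (n + 1) (Fin.snoc a x) (Fin.snoc b y)) ∧
      (∀ y, ∃ x, BFEquiv L M N β (n + 1) (Fin.snoc a x) (Fin.snoc b y)) := by
  rw [BFEquiv]

theorem BFEquiv.qfEquiv (h : BFEquiv L M N α n a b) : QFEquiv L M N a b :=
  (bfEquiv_iff.1 h).1

theorem BFEquiv.forth (h : BFEquiv L M N α n a b) (hβ : β < α) (x : M) :
    ∃ y, BFEquiv L M N β (n + 1) (Fin.snoc a x) (Fin.snoc b y) :=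
  ((bfEquiv_iff.1 h).2 β hβ).1 x

theorem BFEquiv.back (h : BFEquiv L M N α n a b) (hβ : β < α) (y : N) :
    ∃ x, BFEquiv L M N β (n + 1) (Fin.snoc a x) (Fin.snoc b y) :=
  ((bfEquiv_iff.1 h).2 β hβ).2 y

theorem BFEquiv.mono (h : BFEquiv L M N α n a b) (hβ : β ≤ α) : BFEquiv L M N β n a b :=
  bfEquiv_iff.2 ⟨h.qfEquiv, fun _ hγ => (bfEquiv_iff.1 h).2 _ (hγ.trans_le hβ)⟩

theorem BFEquiv.refl (a : Fin n → M) : BFEquiv L M M α n a a := by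
  induction α using WellFoundedLT.induction generalizing n with
  | ind α ih =>
    exact bfEquiv_iff.2 ⟨QFEquiv.refl a,
      fun β hβ => ⟨fun x => ⟨x, ih β hβ _⟩, fun x => ⟨x, ih β hβ _⟩⟩⟩

theorem BFEquiv.symm (h : BFEquiv L M N α n a b) : BFEquiv L N M α n b a := by
  induction α using WellFoundedLT.induction generalizing n with
  | ind α ih =>
    refine bfEquiv_iff.2 ⟨h.qfEquiv.symm, fun β hβ => ⟨fun y => ?_, fun x => ?_⟩⟩
    · obtain ⟨x, hxy⟩ := h.back hβ y
      exact ⟨x, ih β hβ hxy⟩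
    · obtain ⟨y, hxy⟩ := h.forth hβ x
      exact ⟨y, ih β hβ hxy⟩

theorem BFEquiv.comp (h : BFEquiv L M N α n a b) {m : ℕ} (e : Fin m → Fin n) :
    BFEquiv L M N α m (a ∘ e) (b ∘ e) := by
  induction α using WellFoundedLT.induction generalizing n m with
  | ind α ih =>
    have snoc_comp {K : Type w} (c : Fin n → K) (z : K) :
        (Fin.snoc (c ∘ e) z : Fin (m + 1) → K) =
          (Fin.snoc c z : Fin (n + 1) → K) ∘ Fin.snoc (Fin.castSucc ∘ e) (Fin.last n) := by
      rw [Fin.comp_snoc, ← Function.comp_assoc, Fin.snoc_comp_castSucc, Fin.snoc_last]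
    refine bfEquiv_iff.2 ⟨h.qfEquiv.comp e, fun β hβ => ⟨fun x => ?_, fun y => ?_⟩⟩
    · obtain ⟨y, hxy⟩ := h.forth hβ x
      exact ⟨y, by simpa only [snoc_comp] using ih β hβ hxy _⟩
    · obtain ⟨x, hxy⟩ := h.back hβ y
      exact ⟨x, by simpa only [snoc_comp] using ih β hβ hxy _⟩

theorem BFEquiv.exists_append {m : ℕ} (h : BFEquiv L M N (α + m) n a b) (c : Fin m → M) :
    ∃ d, BFEquiv L M N α (n + m) (Fin.append a c) (Fin.append b d) := by
  induction m generalizing α with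
  | zero => exact ⟨Fin.elim0, by simpa [Fin.append_right_nil] using h⟩
  | succ m ih =>
    have h' : BFEquiv L M N (α + 1 + m) n a b := by
      rwa [add_assoc, ← Nat.cast_one, ← Nat.cast_add, add_comm 1 m]
    obtain ⟨d, hd⟩ := ih h' (Fin.init c)
    obtain ⟨y, hy⟩ := hd.forth (lt_add_one α) (c (Fin.last m))
    refine ⟨Fin.snoc d y, ?_⟩
    rw [← Fin.snoc_init_self c, Fin.append_snoc, Fin.append_snoc]
    exact hy

theorem bfEquivInf_of_backAndForth {S : ∀ n, (Fin n → M) → (Fin n → N) → Prop}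
    (qf : ∀ {n a b}, S n a b → QFEquiv L M N a b)
    (forth : ∀ {n a b}, S n a b → ∀ x, ∃ y, S (n + 1) (Fin.snoc a x) (Fin.snoc b y))
    (back : ∀ {n a b}, S n a b → ∀ y, ∃ x, S (n + 1) (Fin.snoc a x) (Fin.snoc b y))
    (h : S n a b) : BFEquivInf L M N n a b := fun α => by
  induction α using WellFoundedLT.induction generalizing n with
  | ind α ih =>
    refine bfEquiv_iff.2 ⟨qf h, fun β hβ => ⟨fun x => ?_, fun y => ?_⟩⟩
    · exact (forth h x).imp fun _ => ih β hβ
    · exact (back h y).imp fun _ => ih β hβ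

theorem scottRank_le
    (h : ∀ (n : ℕ) (a b : Fin n → M), BFEquiv L M M α n a b → BFEquivInf L M M n a b) :
    ScottRank L M ≤ α :=
  csInf_le' h

end

section

variable (L : FirstOrder.Language.{u, v}) {M N : Type w} [L.Structure M] [L.Structure N]
  {α β : Ordinal.{w}}

/-- The relation `(M, x) ≡_α (N, y)` for single elements, regarded as tuples of length one. -/
def PointEquiv (α : Ordinal.{w}) (x : M) (y : N) : Prop :=
  BFEquiv L M N α 1 (fun _ => x) (fun _ => y)

variable {L} {x : M} {y : N}

theorem PointEquiv.mono (h : PointEquiv L α x y) (hβ : β ≤ α) : PointEquiv L β x y :=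
  BFEquiv.mono h hβ

theorem PointEquiv.symm (h : PointEquiv L α x y) : PointEquiv L α y x :=
  BFEquiv.symm h

theorem BFEquiv.pointEquiv {n : ℕ} {a : Fin n → M} {b : Fin n → N} (h : BFEquiv L M N α n a b)
    (i : Fin n) : PointEquiv L α (a i) (b i) :=
  h.comp fun _ => i

end

end ScottTools

namespace PP

section Language

variable {P : Type u} {M N : Type w} [(LP P).Structure M] [(LP P).Structure N] {n : ℕ}
  {a : Fin n → M} {b : Fin n → N} {α β : Ordinal.{w}}

theorem exists_eq_var_inl {ι : Type v} (t : (LP P).Term (ι ⊕ Fin 0)) :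
    ∃ i, t = Language.Term.var (Sum.inl i) := by
  rcases t with (i | i) | ⟨f, _⟩
  · exact ⟨i, rfl⟩
  · exact i.elim0
  · exact f.elim

/-- The relation symbol `E_p`, of which `Rel p` is the interpretation. -/
def relSymbol (p : P) : (LP P).Relations 2 := (⟨⟨rfl⟩, p⟩ : PLift (2 = 2) × P)

theorem qfEquiv_iff : QFEquiv (LP P) M N a b ↔
    (∀ i j, a i = a j ↔ b i = b j) ∧ ∀ (p : P) i j, Rel p (a i) (a j) ↔ Rel p (b i) (b j) := by
  constructor
  · refine fun h => ⟨h.eq_iff, fun p i j => ?_⟩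
    have := h ((relSymbol p).formula₂ (Language.Term.var i) (Language.Term.var j))
      (Language.BoundedFormula.IsAtomic.rel _ _).isQF
    rw [Language.Formula.realize_rel₂, Language.Formula.realize_rel₂] at this
    exact this
  · rintro ⟨heq, hrel⟩ φ hφ
    unfold Language.Formula.Realize
    induction hφ with
    | falsum => exact Iff.rfl
    | imp _ _ ih₁ ih₂ => simpa only [Language.BoundedFormula.realize_imp] using imp_congr ih₁ ih₂
    | of_isAtomic hatomic =>
      rcases hatomic with ⟨t₁, t₂⟩ | ⟨E, ts⟩
      · obtain ⟨i, rfl⟩ := exists_eq_var_inl t₁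
        obtain ⟨j, rfl⟩ := exists_eq_var_inl t₂
        simpa using heq i j
      · obtain rfl := E.1.down
        obtain ⟨p, rfl⟩ : ∃ p, E = relSymbol p := ⟨E.2, rfl⟩
        choose i hi using fun m => exists_eq_var_inl (ts m)
        have realize_ts {K : Type w} [(LP P).Structure K] (c : Fin n → K) :
            (fun m => (ts m).realize (Sum.elim c default)) = ![c (i 0), c (i 1)] := by
          ext m
          fin_cases m <;> simp [hi]
        rw [Language.BoundedFormula.realize_rel, Language.BoundedFormula.realize_rel,
          realize_ts, realize_ts]
        exact hrel p (i 0) (i 1)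

theorem rel_iff_of_qfEquiv (h : QFEquiv (LP P) M N a b) (p : P) (i j : Fin n) :
    Rel p (a i) (a j) ↔ Rel p (b i) (b j) :=
  (qfEquiv_iff.1 h).2 p i j

theorem qfEquiv_snoc (hM : ∀ p : P, Equivalence (Rel (M := M) p))
    (hN : ∀ p : P, Equivalence (Rel (M := N) p)) (h : QFEquiv (LP P) M N a b) {x : M} {y : N}
    (heq : ∀ j, a j = x ↔ b j = y) (hrel : ∀ (p : P) j, Rel p (a j) x ↔ Rel p (b j) y) :
    QFEquiv (LP P) M N (Fin.snoc a x : Fin (n + 1) → M) (Fin.snoc b y : Fin (n + 1) → N) := by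
  refine qfEquiv_iff.2 ⟨fun i j => ?_, fun p i j => ?_⟩ <;>
    cases i using Fin.lastCases <;> cases j using Fin.lastCases <;>
    simp only [Fin.snoc_last, Fin.snoc_castSucc]
  · rw [eq_comm, heq, eq_comm]
  · exact heq _
  · exact h.eq_iff _ _
  · exact iff_of_true ((hM p).refl x) ((hN p).refl y)
  · exact Iff.trans ⟨(hM p).symm, (hM p).symm⟩ <|
      (hrel p _).trans ⟨(hN p).symm, (hN p).symm⟩
  · exact hrel p _
  · exact rel_iff_of_qfEquiv h p _ _

theorem exists_pointEquiv_of_pointEquiv {x : M} {y : N} (h : PointEquiv (LP P) α x y) (hβ : β < α)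
    (z : M) : ∃ t : N, (∀ p : P, Rel p z x ↔ Rel p t y) ∧ PointEquiv (LP P) β z t := by
  obtain ⟨t, ht⟩ := BFEquiv.forth h hβ z
  refine ⟨t, fun p => ?_, by simpa only [Fin.snoc_last] using ht.pointEquiv (Fin.last 1)⟩
  simpa [Fin.snoc] using rel_iff_of_qfEquiv ht.qfEquiv p (Fin.last 1) 0

end Language

section LimitClass

variable {P : Type u} {M N : Type w} [(LP P).Structure M] [(LP P).Structure N]

variable (P) in
/-- The `E_∞`-class of `x`, where `E_∞` is the intersection of all the `E_p`. -/
def limitClass (x : M) : Set M := {z | ∀ p : P, Rel p z x}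

theorem limitClass_eq_of_mem (hM : ∀ p : P, Equivalence (Rel (M := M) p)) {x y : M}
    (h : y ∈ limitClass P x) : limitClass P y = limitClass P x :=
  Set.ext fun _ => ⟨fun hz p => (hM p).trans (hz p) (h p),
    fun hz p => (hM p).trans (hz p) ((hM p).symm (h p))⟩

open Ordinal in
theorem encard_limitClass_le {x : M} {y : N} (h : PointEquiv (LP P) ω x y) :
    (limitClass P x).encard ≤ (limitClass P y).encard := by
  refine ENat.forall_natCast_le_iff_le.1 fun m hm => ?_
  obtain ⟨t, htx, htm⟩ := Set.exists_subset_encard_eq hm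
  obtain ⟨m', c, hc, rfl⟩ := (Set.finite_of_encard_eq_coe htm).fin_param
  have hm' : (0 : Ordinal.{w}) + m' ≤ ω := by simpa using (natCast_lt_omega0 m').le
  obtain ⟨d, hd⟩ := (BFEquiv.mono h hm').exists_append c
  have d_injective : Function.Injective d := fun i j hij => hc <| by
    simpa [hij] using hd.qfEquiv.eq_iff (Fin.natAdd 1 i) (Fin.natAdd 1 j)
  have range_d_subset : Set.range d ⊆ limitClass P y := by
    rintro _ ⟨j, rfl⟩ p
    simpa [Fin.append_left, Fin.append_right] using
      (rel_iff_of_qfEquiv hd.qfEquiv p (Fin.natAdd 1 j) (Fin.castAdd m' 0)).1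
        (by simpa using htx ⟨j, rfl⟩ p)
  calc (m : ℕ∞) = (Set.range c).encard := htm.symm
    _ = (Set.range d).encard := by
      rw [← Set.image_univ, ← Set.image_univ, hc.encard_image, d_injective.encard_image]
    _ ≤ (limitClass P y).encard := Set.encard_le_encard range_d_subset

theorem exists_mem_limitClass_forall_ne {n : ℕ} {a : Fin n → M} {b : Fin n → N}
    (h : QFEquiv (LP P) M N a b) {i : Fin n}
    (hcard : (limitClass P (a i)).encard = (limitClass P (b i)).encard) {x : M}
    (hx : x ∈ limitClass P (a i)) (hnew : ∀ j, a j ≠ x) :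
    ∃ y ∈ limitClass P (b i), ∀ j, b j ≠ y := by
  let T : Set (Fin n) := {j | a j ∈ limitClass P (a i)}
  have hT (j : Fin n) : j ∈ T ↔ b j ∈ limitClass P (b i) :=
    forall_congr' fun p => rel_iff_of_qfEquiv h p j i
  have hlt : (b '' T).encard < (limitClass P (b i)).encard :=
    calc (b '' T).encard ≤ (a '' T).encard :=
        encard_image_le_encard_image (fun i j => (h.eq_iff i j).1) T
      _ < (limitClass P (a i)).encard :=
        (T.toFinite.image a).encard_lt_encard <| (Set.ssubset_iff_of_subset
          (Set.image_subset_iff.2 fun _ hj => hj)).2 ⟨x, hx, fun ⟨j, _, hj⟩ => hnew j hj⟩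
      _ = (limitClass P (b i)).encard := hcard
  obtain ⟨y, hy, hyT⟩ : (limitClass P (b i) \ b '' T).Nonempty :=
    Set.sdiff_nonempty.2 fun hsub => hlt.not_ge (Set.encard_le_encard hsub)
  refine ⟨y, hy, ?_⟩
  rintro j rfl
  exact hyT ⟨j, (hT j).2 hy, rfl⟩

end LimitClass

section Tree

open Ordinal

variable {M : Type w} [(LP ℕ).Structure M]

/-- Agreement up to level `k`: level `0` is the trivial relation and level `k + 1` is `E_k`, so
that the classes of all these relations form a tree with a root. The `Agree k`-class of `x` is
called the node of `x` at level `k`. -/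
def Agree : ℕ → M → M → Prop
  | 0, _, _ => True
  | k + 1, x, y => Rel k x y

variable (M) in
/-- The theory of binarily refining equivalence relations, except that a class need not split: it
contains at most two, rather than exactly two, classes of the next relation. -/
structure IsBinaryRefining : Prop where
  equivalence (k : ℕ) : Equivalence (Agree (M := M) k)
  agree_of_succ {k : ℕ} {x y : M} : Agree (k + 1) x y → Agree k x y
  agree_succ_of_three {k : ℕ} {x y z : M} : Agree k x z → Agree k y z →
    Agree (k + 1) x y ∨ Agree (k + 1) x z ∨ Agree (k + 1) y z

/-- The node of `z` at level `k + 1` hangs off the branch of `x`, as a sibling of the node of `x`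
at that level. -/
def SplitsAt (k : ℕ) (z x : M) : Prop := Agree k z x ∧ ¬ Agree (k + 1) z x

/-- The nodes of `u` and `v` at level `k` contain `≡_α`-equivalent points. -/
def NodeEquiv (α : Ordinal.{w}) (k : ℕ) (u v : M) : Prop :=
  ∃ x y, Agree k x u ∧ Agree k y v ∧ PointEquiv (LP ℕ) α x y

/-- The invariant of points used in the back-and-forth argument: the size of the `E_∞`-class and
the `α`-equivalence types of the nodes that hang off the branch. -/
structure Similar (α : Ordinal.{w}) (x y : M) : Prop where
  encard_limitClass : (limitClass ℕ x).encard = (limitClass ℕ y).encard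
  forth {k : ℕ} {z : M} : SplitsAt k z x → ∃ t, SplitsAt k t y ∧ NodeEquiv α (k + 1) z t
  back {k : ℕ} {t : M} : SplitsAt k t y → ∃ z, SplitsAt k z x ∧ NodeEquiv α (k + 1) z t

/-- The back-and-forth system on `M`; the matched tuples turn out to be `≡_∞`-equivalent. -/
structure Matched (α : Ordinal.{w}) {n : ℕ} (a b : Fin n → M) : Prop where
  qfEquiv : QFEquiv (LP ℕ) M M a b
  similar (i : Fin n) : Similar α (a i) (b i)

variable {α β : Ordinal.{w}} {k l n : ℕ} {x y z x' y' u v : M} {a b : Fin n → M}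

theorem forall_agree_iff : (∀ k, Agree k x y) ↔ ∀ p : ℕ, Rel p x y :=
  ⟨fun h p => h (p + 1), fun h k => by cases k with | zero => trivial | succ p => exact h p⟩

theorem agree_iff_of_forall_rel_iff (h : ∀ p : ℕ, Rel p x y ↔ Rel p x' y') (k : ℕ) :
    Agree k x y ↔ Agree k x' y' := by
  cases k with
  | zero => exact Iff.rfl
  | succ p => exact h p

theorem agree_iff_of_qfEquiv (h : QFEquiv (LP ℕ) M M a b) (k : ℕ) (i j : Fin n) :
    Agree k (a i) (a j) ↔ Agree k (b i) (b j) :=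
  agree_iff_of_forall_rel_iff (fun p => rel_iff_of_qfEquiv h p i j) k

theorem NodeEquiv.mono (h : NodeEquiv α k u v) (hβ : β ≤ α) : NodeEquiv β k u v :=
  let ⟨x, y, hx, hy, hxy⟩ := h
  ⟨x, y, hx, hy, hxy.mono hβ⟩

theorem NodeEquiv.symm (h : NodeEquiv α k u v) : NodeEquiv α k v u :=
  let ⟨x, y, hx, hy, hxy⟩ := h
  ⟨y, x, hy, hx, hxy.symm⟩

theorem Similar.symm (h : Similar α x y) : Similar α y x where
  encard_limitClass := h.encard_limitClass.symm
  forth hz := (h.back hz).imp fun _ => And.imp_right NodeEquiv.symm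
  back hz := (h.forth hz).imp fun _ => And.imp_right NodeEquiv.symm

theorem Matched.symm (h : Matched α a b) : Matched α b a :=
  ⟨h.qfEquiv.symm, fun i => (h.similar i).symm⟩

namespace IsBinaryRefining

theorem agree_mono (h : IsBinaryRefining M) (hkl : k ≤ l) (hxy : Agree l x y) : Agree k x y := by
  induction l, hkl using Nat.le_induction with
  | base => exact hxy
  | succ l _ ih => exact ih (h.agree_of_succ hxy)

theorem agree_congr_left (h : IsBinaryRefining M) (hxy : Agree k x y) (z : M) :
    Agree k x z ↔ Agree k y z :=
  ⟨(h.equivalence k).trans ((h.equivalence k).symm hxy), (h.equivalence k).trans hxy⟩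

theorem agree_congr_right (h : IsBinaryRefining M) (hxy : Agree k x y) (z : M) :
    Agree k z x ↔ Agree k z y :=
  ⟨fun hz => (h.equivalence k).trans hz hxy,
    fun hz => (h.equivalence k).trans hz ((h.equivalence k).symm hxy)⟩

theorem nodeEquiv_congr (h : IsBinaryRefining M) (hu : Agree k u x) (hv : Agree k v y) :
    NodeEquiv α k u v ↔ NodeEquiv α k x y := by
  simp only [NodeEquiv, h.agree_congr_right hu, h.agree_congr_right hv]

end IsBinaryRefining

theorem splitsAt_of_forall_rel_iff (h : ∀ p : ℕ, Rel p x y ↔ Rel p x' y') (hxy : SplitsAt k x y) :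
    SplitsAt k x' y' :=
  ⟨(agree_iff_of_forall_rel_iff h k).1 hxy.1,
    fun hxy' => hxy.2 ((agree_iff_of_forall_rel_iff h (k + 1)).2 hxy')⟩

theorem exists_splitsAt_nodeEquiv (h : IsBinaryRefining M) (hxy : PointEquiv (LP ℕ) β x y)
    (hα : α < β) (hz : SplitsAt k z x) : ∃ t, SplitsAt k t y ∧ NodeEquiv α (k + 1) z t := by
  obtain ⟨t, hrel, hzt⟩ := exists_pointEquiv_of_pointEquiv hxy hα z
  exact ⟨t, splitsAt_of_forall_rel_iff hrel hz,
    z, t, (h.equivalence _).refl z, (h.equivalence _).refl t, hzt⟩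

theorem similar_of_pointEquiv (h : IsBinaryRefining M) (hxy : PointEquiv (LP ℕ) (α + ω) x y) :
    Similar α x y where
  encard_limitClass := le_antisymm (encard_limitClass_le (hxy.mono le_add_self))
    (encard_limitClass_le (hxy.symm.mono le_add_self))
  forth := exists_splitsAt_nodeEquiv h hxy (lt_add_of_pos_right α omega0_pos)
  back ht := (exists_splitsAt_nodeEquiv h hxy.symm (lt_add_of_pos_right α omega0_pos) ht).imp
    fun _ => And.imp_right NodeEquiv.symm

theorem exists_similar_of_nodeEquiv (h : IsBinaryRefining M)
    (huv : NodeEquiv (α + ω + 1) k u v) : ∃ y, Agree k y v ∧ Similar α u y := by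
  obtain ⟨u', v', hu, hv, h'⟩ := huv
  obtain ⟨y, hrel, huy⟩ := exists_pointEquiv_of_pointEquiv h' (lt_add_one (α + ω)) u
  have hy : Agree k y v' :=
    (agree_iff_of_forall_rel_iff hrel k).1 ((h.equivalence k).symm hu)
  exact ⟨y, (h.equivalence k).trans hy hv, similar_of_pointEquiv h huy⟩

theorem matched_of_bfEquiv (h : IsBinaryRefining M) (hab : BFEquiv (LP ℕ) M M (α + ω) n a b) :
    Matched α a b :=
  ⟨hab.qfEquiv, fun i => similar_of_pointEquiv h (hab.pointEquiv i)⟩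

theorem similar_refl (h : IsBinaryRefining M) (α : Ordinal.{w}) (x : M) : Similar α x x :=
  have nodeEquiv_refl (k : ℕ) (z : M) : NodeEquiv α k z z :=
    ⟨z, z, (h.equivalence k).refl z, (h.equivalence k).refl z, BFEquiv.refl _⟩
  { encard_limitClass := rfl
    forth := fun hz => ⟨_, hz, nodeEquiv_refl _ _⟩
    back := fun hz => ⟨_, hz, nodeEquiv_refl _ _⟩ }

theorem Similar.of_mem_limitClass (h : IsBinaryRefining M) (hxy : Similar α x y)
    (hx : x' ∈ limitClass ℕ x) (hy : y' ∈ limitClass ℕ y) : Similar α x' y' := by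
  have limitClass_eq {u v : M} (hu : u ∈ limitClass ℕ v) : limitClass ℕ u = limitClass ℕ v :=
    limitClass_eq_of_mem (fun p => h.equivalence (p + 1)) hu
  have splitsAt_iff {u v : M} (hu : u ∈ limitClass ℕ v) (k : ℕ) (z : M) :
      SplitsAt k z u ↔ SplitsAt k z v := by
    simp only [SplitsAt, h.agree_congr_right (forall_agree_iff.2 hu _)]
  refine ⟨?_, fun hz => ?_, fun ht => ?_⟩
  · rw [limitClass_eq hx, limitClass_eq hy, hxy.encard_limitClass]
  · simpa only [splitsAt_iff hy] using hxy.forth ((splitsAt_iff hx _ _).1 hz)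
  · simpa only [splitsAt_iff hx] using hxy.back ((splitsAt_iff hy _ _).1 ht)

theorem exists_finite_agree (h : IsBinaryRefining M) (k : ℕ) :
    ∃ S : Set M, S.Finite ∧ ∀ x, ∃ s ∈ S, Agree k x s := by
  induction k with
  | zero =>
    rcases isEmpty_or_nonempty M with _ | ⟨⟨s⟩⟩
    · exact ⟨∅, Set.finite_empty, isEmptyElim⟩
    · exact ⟨{s}, Set.finite_singleton s, fun _ => ⟨s, rfl, trivial⟩⟩
  | succ k ih =>
    obtain ⟨S, hS, hcover⟩ := ih
    have exists_sibling (s : M) :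
        ∃ s', ∀ x, Agree k x s → Agree (k + 1) x s ∨ Agree (k + 1) x s' := by
      by_cases hs : ∃ s', SplitsAt k s' s
      · obtain ⟨s', hs', hne⟩ := hs
        refine ⟨s', fun x hx => ?_⟩
        have := h.agree_succ_of_three hx hs'
        tauto
      · simp only [SplitsAt, not_exists, not_and, not_not] at hs
        exact ⟨s, fun x hx => .inl (hs x hx)⟩
    choose sibling h_sibling using exists_sibling
    refine ⟨S ∪ sibling '' S, hS.union (hS.image sibling), fun x => ?_⟩
    obtain ⟨s, hs, hx⟩ := hcover x
    rcases h_sibling s x hx with hxs | hxs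
    · exact ⟨s, .inl hs, hxs⟩
    · exact ⟨sibling s, .inr ⟨s, hs, rfl⟩, hxs⟩

theorem exists_countable_agree (h : IsBinaryRefining M) :
    ∃ D : Set M, D.Countable ∧ ∀ k x, ∃ s ∈ D, Agree k x s := by
  choose S hS hcover using exists_finite_agree h
  refine ⟨⋃ k, S k, Set.countable_iUnion fun k => (hS k).countable, fun k x => ?_⟩
  obtain ⟨s, hs, hx⟩ := hcover k x
  exact ⟨s, Set.mem_iUnion.2 ⟨k, hs⟩, hx⟩

theorem exists_forall_nodeEquiv_of_nodeEquiv (h : IsBinaryRefining M) : ∃ α : Ordinal.{w}, α < ω₁ ∧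
    ∀ β < ω₁, ∀ (k : ℕ) (u v : M), NodeEquiv α k u v → NodeEquiv β k u v := by
  obtain ⟨D, hD, hcover⟩ := exists_countable_agree h
  have : Countable D := hD.to_subtype
  obtain ⟨α, hα, hstable⟩ := exists_lt_omega_one_forall_imp
    (p := fun (i : ℕ × D × D) β => NodeEquiv β i.1 i.2.1.1 i.2.2.1)
    fun _ _ _ hβ huv => huv.mono hβ
  refine ⟨α, hα, fun β hβ k u v huv => ?_⟩
  obtain ⟨s, hs, hus⟩ := hcover k u
  obtain ⟨t, ht, hvt⟩ := hcover k v
  rw [h.nodeEquiv_congr hus hvt] at huv ⊢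
  exact hstable β hβ (k, ⟨s, hs⟩, ⟨t, ht⟩) huv

theorem Matched.snoc (h : IsBinaryRefining M) (hab : Matched α a b) (hxy : Similar α x y)
    (heq : ∀ j, a j = x ↔ b j = y) (hagree : ∀ k j, Agree k (a j) x ↔ Agree k (b j) y) :
    Matched α (Fin.snoc a x : Fin (n + 1) → M) (Fin.snoc b y : Fin (n + 1) → M) where
  qfEquiv := qfEquiv_snoc (fun p => h.equivalence (p + 1)) (fun p => h.equivalence (p + 1))
    hab.qfEquiv heq fun p => hagree (p + 1)
  similar i := by
    cases i using Fin.lastCases with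
    | last => simpa only [Fin.snoc_last] using hxy
    | cast i => simpa only [Fin.snoc_castSucc] using hab.similar i

theorem Matched.forth_of_mem_limitClass (h : IsBinaryRefining M) (hab : Matched α a b) {i : Fin n}
    (hx : x ∈ limitClass ℕ (a i)) :
    ∃ y, Matched α (Fin.snoc a x : Fin (n + 1) → M) (Fin.snoc b y : Fin (n + 1) → M) := by
  obtain ⟨y, hy, heq⟩ : ∃ y ∈ limitClass ℕ (b i), ∀ j, a j = x ↔ b j = y := by
    by_cases hold : ∃ j, a j = x
    · obtain ⟨j, rfl⟩ := hold
      exact ⟨b j, fun p => (rel_iff_of_qfEquiv hab.qfEquiv p j i).1 (hx p),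
        fun m => hab.qfEquiv.eq_iff m j⟩
    · have hnew := not_exists.1 hold
      obtain ⟨y, hy, hynew⟩ := exists_mem_limitClass_forall_ne hab.qfEquiv
        (hab.similar i).encard_limitClass hx hnew
      exact ⟨y, hy, fun j => iff_of_false (hnew j) (hynew j)⟩
  refine ⟨y, hab.snoc h ((hab.similar i).of_mem_limitClass h hx hy) heq fun k j => ?_⟩
  rw [h.agree_congr_right (forall_agree_iff.2 hx k), h.agree_congr_right (forall_agree_iff.2 hy k)]
  exact agree_iff_of_qfEquiv hab.qfEquiv k j i

theorem Matched.not_agree_of_splitsAt (h : IsBinaryRefining M) (hab : Matched α a b) {i : Fin n}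
    (hxi : Agree l x (a i)) (hx : ∀ j, ¬ Agree (l + 1) x (a j)) (hy : SplitsAt l y (b i))
    (j : Fin n) : ¬ Agree (l + 1) y (b j) := fun hyj => by
  have hbji : Agree l (b j) (b i) := (h.agree_congr_left (h.agree_of_succ hyj) _).1 hy.1
  have haji : Agree l (a j) (a i) := (agree_iff_of_qfEquiv hab.qfEquiv l j i).2 hbji
  -- A node has at most two children; `x` occupies one of them, so `a j` and `a i` share the other.
  have haji' : Agree (l + 1) (a j) (a i) :=
    ((h.agree_succ_of_three hxi haji).resolve_left (hx j)).resolve_left (hx i)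
  exact hy.2 ((h.agree_congr_left hyj _).2 ((agree_iff_of_qfEquiv hab.qfEquiv _ j i).1 haji'))

theorem Matched.forth_of_splitsAt (h : IsBinaryRefining M)
    (hα : ∀ (k : ℕ) (u v : M), NodeEquiv α k u v → NodeEquiv (α + ω + 1) k u v)
    (hab : Matched α a b) {i : Fin n} (hxi : Agree l x (a i))
    (hx : ∀ j, ¬ Agree (l + 1) x (a j)) :
    ∃ y, Matched α (Fin.snoc a x : Fin (n + 1) → M) (Fin.snoc b y : Fin (n + 1) → M) := by
  obtain ⟨v, hv, hxv⟩ := (hab.similar i).forth ⟨hxi, hx i⟩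
  obtain ⟨y, hyv, hxy⟩ := exists_similar_of_nodeEquiv h (hα _ _ _ hxv)
  have hy (j : Fin n) : ¬ Agree (l + 1) y (b j) := by
    rw [h.agree_congr_left hyv]
    exact hab.not_agree_of_splitsAt h hxi hx hv j
  have hyi : Agree l y (b i) := (h.agree_congr_left (h.agree_of_succ hyv) _).2 hv.1
  refine ⟨y, hab.snoc h hxy (fun j => iff_of_false ?_ ?_) fun k j => ?_⟩
  · rintro rfl
    exact hx j ((h.equivalence _).refl _)
  · rintro rfl
    exact hy j ((h.equivalence _).refl _)
  · rcases Nat.lt_or_ge l k with hlk | hkl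
    · exact iff_of_false
        (fun hj => hx j (h.agree_mono hlk ((h.equivalence k).symm hj)))
        (fun hj => hy j (h.agree_mono hlk ((h.equivalence k).symm hj)))
    · rw [h.agree_congr_right (h.agree_mono hkl hxi), h.agree_congr_right (h.agree_mono hkl hyi)]
      exact agree_iff_of_qfEquiv hab.qfEquiv k j i

theorem exists_agree_forall_not_agree_succ (h : IsBinaryRefining M) [Nonempty (Fin n)]
    (hx : ∀ i, x ∉ limitClass ℕ (a i)) :
    ∃ l i, Agree l x (a i) ∧ ∀ j, ¬ Agree (l + 1) x (a j) := by
  have exists_splitsAt (i : Fin n) : ∃ l, SplitsAt l x (a i) := by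
    by_contra! hsplit
    refine hx i (forall_agree_iff.1 fun k => ?_)
    induction k with
    | zero => trivial
    | succ k ih => exact not_not.1 fun hne => hsplit k ⟨ih, hne⟩
  choose l hl using exists_splitsAt
  obtain ⟨i, hi⟩ := Finite.exists_max l
  exact ⟨l i, i, (hl i).1, fun j hj => (hl j).2 (h.agree_mono (Nat.succ_le_succ (hi j)) hj)⟩

theorem Matched.forth (h : IsBinaryRefining M)
    (hα : ∀ (k : ℕ) (u v : M), NodeEquiv α k u v → NodeEquiv (α + ω + 1) k u v)
    (hab : Matched α a b) (x : M) :
    ∃ y, Matched α (Fin.snoc a x : Fin (n + 1) → M) (Fin.snoc b y : Fin (n + 1) → M) := by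
  rcases isEmpty_or_nonempty (Fin n) with _ | _
  · exact ⟨x, hab.snoc h (similar_refl h α x) isEmptyElim fun _ => isEmptyElim⟩
  by_cases hx : ∃ i, x ∈ limitClass ℕ (a i)
  · obtain ⟨i, hi⟩ := hx
    exact hab.forth_of_mem_limitClass h hi
  · obtain ⟨l, i, hxi, hoff⟩ := exists_agree_forall_not_agree_succ h (not_exists.1 hx)
    exact hab.forth_of_splitsAt h hα hxi hoff

theorem Matched.bfEquivInf (h : IsBinaryRefining M)
    (hα : ∀ (k : ℕ) (u v : M), NodeEquiv α k u v → NodeEquiv (α + ω + 1) k u v)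
    (hab : Matched α a b) : BFEquivInf (LP ℕ) M M n a b :=
  bfEquivInf_of_backAndForth (S := fun _ => Matched α) Matched.qfEquiv
    (fun hab => hab.forth h hα)
    (fun hab y => (hab.symm.forth h hα y).imp fun _ => Matched.symm) hab

theorem isBinaryRefining_of_at_most_two
    (hequiv : ∀ n : ℕ, Equivalence (fun a b : M => Rel n a b))
    (htwo : ∃ a b : M, ∀ c : M, Rel 0 c a ∨ Rel 0 c b)
    (hrefine : ∀ (n : ℕ) (a b : M), Rel (n + 1) a b → Rel n a b)
    (hsplit : ∀ (n : ℕ) (a : M), ∃ b c : M,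
      ∀ d : M, Rel n d a → (Rel (n + 1) d b ∨ Rel (n + 1) d c)) : IsBinaryRefining M where
  equivalence
    | 0 => ⟨fun _ => trivial, fun _ => trivial, fun _ _ => trivial⟩
    | k + 1 => hequiv k
  agree_of_succ {k x y} hxy := by
    cases k with
    | zero => trivial
    | succ k => exact hrefine k x y hxy
  agree_succ_of_three {k x y z} hx hy := by
    obtain ⟨b, c, hbc⟩ : ∃ b c : M, ∀ d, Agree k d z → Rel k d b ∨ Rel k d c := by
      cases k with
      | zero => exact htwo.imp fun _ => Exists.imp fun _ hbc d _ => hbc d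
      | succ k => exact hsplit k z
    have hz : Agree k z z := by
      cases k with
      | zero => trivial
      | succ k => exact (hequiv k).refl z
    exact rel_of_two_classes (hequiv k) (hbc x hx) (hbc y hy) (hbc z hz)

end Tree

end PP

open Ordinal in
theorem scottRank_lt_omega1_of_refBin_general {M : Type w} [(LP ℕ).Structure M]
    (h : IsBinaryRefining M) : ScottRank (LP ℕ) M < (Cardinal.aleph 1).ord := by
  rw [Cardinal.ord_aleph]
  obtain ⟨α, hα, hstable⟩ := exists_forall_nodeEquiv_of_nodeEquiv h
  have hω : α + ω < ω₁ := isPrincipal_add_omega 1 hα omega0_lt_omega_one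
  have hω_succ : α + ω + 1 < ω₁ := (Cardinal.isSuccLimit_omega 1).add_one_lt hω
  refine (scottRank_le fun n a b hab => ?_).trans_lt hω
  exact (matched_of_bfEquiv h hab).bfEquivInf h (hstable _ hω_succ)

/-- Every model of REF(bin) — the theory of infinitely many binarily refining equivalence
relations `E_n` — has Scott rank strictly less than `ω₁`. -/
theorem scottRank_lt_omega1_of_refBin (M : Type w) [(LP ℕ).Structure M]
    (hequiv : ∀ n : ℕ, Equivalence (fun a b : M => Rel n a b))
    (htwo : ∃ a b : M, ¬ Rel 0 a b ∧ ∀ c : M, Rel 0 c a ∨ Rel 0 c b)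
    (hrefine : ∀ (n : ℕ) (a b : M), Rel (n + 1) a b → Rel n a b)
    (hsplit : ∀ (n : ℕ) (a : M), ∃ b c : M, Rel n b a ∧ Rel n c a ∧ ¬ Rel (n + 1) b c ∧
      ∀ d : M, Rel n d a → (Rel (n + 1) d b ∨ Rel (n + 1) d c)) :
    ScottRank (LP ℕ) M < (Cardinal.aleph 1).ord := by
  refine scottRank_lt_omega1_of_refBin_general
    (isBinaryRefining_of_at_most_two hequiv ?_ hrefine fun n a => ?_)
  · exact htwo.imp fun _ => Exists.imp fun _ h => h.2
  · exact (hsplit n a).imp fun _ => Exists.imp fun _ h => h.2.2.2
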